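/- Let n ≥ 1 and let p_n : (ℂ*)^4 → (ℂ*)^4 be the map p_n(w, x, y, z) = (w^n, w/x, w·y, w·z). Then U_n = p_n(U) is an irreducible subset of ℂ^4 equipped with the Zariski topology, where U = {(w, x, y, z) ∈ (ℂ*)^4 : w + y = 1 and x + z = 1}. -/

import Mathlib

noncomputable section

/-- The Zariski topology on `ℂ^4` (points given as functions `Fin 4 → ℂ`): the
closed sets are the common zero loci of families of polynomials in four
variables; equivalently, the topology is generated by the basic open sets
`{x | p(x) ≠ 0}` for polynomials `p`. -/
def zariskiC4 : TopologicalSpace (Fin 4 → ℂ) :=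
  TopologicalSpace.generateFrom
    {s | ∃ p : MvPolynomial (Fin 4) ℂ, s = {x | MvPolynomial.eval x p ≠ 0}}

/-- The surface `U = {(w,x,y,z) ∈ (ℂ*)^4 : w + y = 1, x + z = 1} ⊆ ℂ^4`, with
points written as functions `Fin 4 → ℂ`. -/
def U : Set (Fin 4 → ℂ) :=
  {x | (∀ i, x i ≠ 0) ∧ x 0 + x 2 = 1 ∧ x 1 + x 3 = 1}

/-- The map `p_n(w, x, y, z) = (wⁿ, w/x, w·y, w·z)` on points of `ℂ^4`. -/
def pmap (n : ℕ) (x : Fin 4 → ℂ) : Fin 4 → ℂ :=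
  ![x 0 ^ n, x 0 / x 1, x 0 * x 2, x 0 * x 3]

/-- Every point of a Zariski open set has a basic open neighbourhood inside it. -/
theorem exists_basic (O : Set (Fin 4 → ℂ)) (hO : @IsOpen _ zariskiC4 O) :
    ∀ x ∈ O, ∃ p : MvPolynomial (Fin 4) ℂ, MvPolynomial.eval x p ≠ 0 ∧
      ∀ y, MvPolynomial.eval y p ≠ 0 → y ∈ O := by
  have h : TopologicalSpace.GenerateOpen
    {s | ∃ p : MvPolynomial (Fin 4) ℂ, s = {x | MvPolynomial.eval x p ≠ 0}} O := hO
  clear hO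
  induction h with
  | basic s hs =>
    obtain ⟨p, rfl⟩ := hs
    intro x hx
    exact ⟨p, hx, fun y hy => hy⟩
  | univ =>
    intro x _
    exact ⟨1, by simp, fun y _ => Set.mem_univ y⟩
  | inter s t _ _ ihs iht =>
    intro x hx
    obtain ⟨p, hp, hp'⟩ := ihs x hx.1
    obtain ⟨q, hq, hq'⟩ := iht x hx.2
    refine ⟨p * q, by simpa using ⟨hp, hq⟩, fun y hy => ?_⟩
    rw [map_mul] at hy
    exact ⟨hp' y (left_ne_zero_of_mul hy), hq' y (right_ne_zero_of_mul hy)⟩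
  | sUnion S _ ih =>
    intro x hx
    obtain ⟨s, hs, hxs⟩ := hx
    obtain ⟨p, hp, hp'⟩ := ih s hs x hxs
    exact ⟨p, hp, fun y hy => ⟨s, hs, hp' y hy⟩⟩

/-- Polynomial parametrization of `U_n`, with `s = w * x` and `t = 1 / x`. -/
def par (n : ℕ) : Fin 4 → MvPolynomial (Fin 2) ℂ :=
  ![(MvPolynomial.X 0 * MvPolynomial.X 1) ^ n,
    MvPolynomial.X 0 * MvPolynomial.X 1 ^ 2,
    MvPolynomial.X 0 * MvPolynomial.X 1 * (1 - MvPolynomial.X 0 * MvPolynomial.X 1),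
    MvPolynomial.X 0 * MvPolynomial.X 1 - MvPolynomial.X 0]

/-- The locus removed from the parameter plane. -/
def den : MvPolynomial (Fin 2) ℂ :=
  MvPolynomial.X 0 * MvPolynomial.X 1 * (1 - MvPolynomial.X 0 * MvPolynomial.X 1) *
    (MvPolynomial.X 1 - 1)

theorem eval_par (n : ℕ) (v : Fin 2 → ℂ) :
    (fun i => MvPolynomial.eval v (par n i)) =
      ![(v 0 * v 1) ^ n, v 0 * v 1 ^ 2, v 0 * v 1 * (1 - v 0 * v 1), v 0 * v 1 - v 0] := by
  funext i
  fin_cases i <;> simp [par]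

theorem eval_bind (n : ℕ) (v : Fin 2 → ℂ) (p : MvPolynomial (Fin 4) ℂ) :
    MvPolynomial.eval v (MvPolynomial.bind₁ (par n) p) =
      MvPolynomial.eval (fun i => MvPolynomial.eval v (par n i)) p := by
  have := MvPolynomial.eval₂Hom_bind₁ (RingHom.id ℂ) v (par n) p
  exact this

theorem par_mem (n : ℕ) (v : Fin 2 → ℂ) (hv : MvPolynomial.eval v den ≠ 0) :
    (fun i => MvPolynomial.eval v (par n i)) ∈ pmap n '' U := by
  simp only [den, map_mul, map_sub, map_one, MvPolynomial.eval_X] at hv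
  have h3 := right_ne_zero_of_mul hv
  have h2 := right_ne_zero_of_mul (left_ne_zero_of_mul hv)
  have h01 := left_ne_zero_of_mul (left_ne_zero_of_mul hv)
  have h0 := left_ne_zero_of_mul h01
  have h1 := right_ne_zero_of_mul h01
  have h4 : 1 - (v 1)⁻¹ ≠ 0 := by
    intro h
    apply h3
    field_simp at h
    simpa using h
  refine ⟨![v 0 * v 1, (v 1)⁻¹, 1 - v 0 * v 1, 1 - (v 1)⁻¹], ⟨?_, ?_, ?_⟩, ?_⟩
  · intro i
    fin_cases i
    · exact h01
    · exact inv_ne_zero h1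
    · exact h2
    · exact h4
  · simp
  · simp
  · rw [eval_par]
    funext i
    fin_cases i
    · simp [pmap]
    · simp [pmap]; ring
    · simp [pmap]
    · simp [pmap]; field_simp

theorem mem_par (n : ℕ) (y : Fin 4 → ℂ) (hy : y ∈ pmap n '' U) :
    ∃ v : Fin 2 → ℂ, (fun i => MvPolynomial.eval v (par n i)) = y := by
  obtain ⟨x, ⟨hx, h1, h2⟩, rfl⟩ := hy
  have hx1 := hx 1
  refine ⟨![x 0 * x 1, (x 1)⁻¹], ?_⟩
  have e2 : x 2 = 1 - x 0 := by linear_combination h1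
  have e3 : x 3 = 1 - x 1 := by linear_combination h2
  rw [eval_par]
  funext i
  fin_cases i
  · simp [pmap, hx1]
  · simp [pmap]; field_simp
  · simp [pmap, hx1, e2]
  · simp [pmap, hx1, e3]; ring

/-- For `n ≥ 1`, the image `U_n = p_n(U)` of
`U = {(w,x,y,z) ∈ (ℂ*)^4 : w + y = 1, x + z = 1}` under
`p_n(w,x,y,z) = (wⁿ, w/x, w·y, w·z)` is an irreducible subset of `ℂ^4` equipped
with the Zariski topology. -/
theorem Un_irreducible (n : ℕ) (hn : 1 ≤ n) :
    @IsIrreducible (Fin 4 → ℂ) zariskiC4 (pmap n '' U) := by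
  have hden : den ≠ 0 := by
    intro h
    have h' := congrArg (MvPolynomial.eval (![1, 2] : Fin 2 → ℂ)) h
    norm_num [den] at h'
  have hex : ∀ q : MvPolynomial (Fin 2) ℂ, q ≠ 0 → ∃ v, MvPolynomial.eval v q ≠ 0 := by
    intro q hq
    by_contra! hc
    exact hq (MvPolynomial.funext fun v => by simpa using hc v)
  refine ⟨?_, ?_⟩
  · obtain ⟨v, hv⟩ := hex den hden
    exact ⟨_, par_mem n v hv⟩
  · rintro A B hA hB ⟨a, haU, haA⟩ ⟨b, hbU, hbB⟩
    obtain ⟨p, hp, hp'⟩ := exists_basic A hA a haA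
    obtain ⟨q, hq, hq'⟩ := exists_basic B hB b hbB
    obtain ⟨va, rfl⟩ := mem_par n a haU
    obtain ⟨vb, rfl⟩ := mem_par n b hbU
    rw [← eval_bind] at hp hq
    have hp0 : MvPolynomial.bind₁ (par n) p ≠ 0 := fun h => hp (by rw [h, map_zero])
    have hq0 : MvPolynomial.bind₁ (par n) q ≠ 0 := fun h => hq (by rw [h, map_zero])
    obtain ⟨v, hv⟩ := hex _ (mul_ne_zero (mul_ne_zero hp0 hq0) hden)
    rw [map_mul, map_mul] at hv
    have hvd := right_ne_zero_of_mul hv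
    have hvp := left_ne_zero_of_mul (left_ne_zero_of_mul hv)
    have hvq := right_ne_zero_of_mul (left_ne_zero_of_mul hv)
    rw [eval_bind] at hvp hvq
    exact ⟨_, par_mem n v hvd, hp' _ hvp, hq' _ hvq⟩
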